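/- Let 0 < μ ≤ 1/2, let g : V → ℝ be feasible for the spectral program for μ, and fix an enumeration v_1,…,v_n of V with g(v_1) ≥ … ≥ g(v_n). Let S_j = {v_1,…,v_j}, let h be the largest index with Vol(S_h) ≤ Vol(G)/2, let z be the largest index with g(v_z) > 0, and let g_+(v) = max(g(v),0). If z > h, then Q_L(g_+)/Q_D(g_+) ≥ (1/2)·min{ ((μ/(1−μ))·φ_μ(G))², ((μ²·φ_μ(G) + (1−2μ)·φ_0(G))/(1−μ−μ²))² }. -/

import Mathlib

open Finset

/-!
Let `P = {g > 0}`, `T = Vol(G)`, and let `[A, B]` be the interval containing every `g(v)²`. Since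
`(g - a)(g - b)` with `a = √A`, `b = √B` is nonpositive on `P` and at most `2b(a + b)` elsewhere,
its mean bounds `Vol({g ≤ 0})`, and likewise `Vol({g ≥ 0})`, from below by `μT`.

The superlevel sets `U` of `g₊²` are equal to `P` for levels in `(0, A]`, where `P` is
`μ`-balanced; at the higher levels they are subsets of `P`, which have conductance at least `φ_0`,
and at least `φ_μ` once their volume reaches `μT`. By the coarea formula, integrating
`cut(U) - R·Vol(U)` over the levels `[0, B]` shows that the total variation of `g₊²` is at least
`R·Q_D(g₊)`, where `R` is the smaller of the two constants in the statement: the surplus gained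
below `A` pays for the deficit `max(0, R - φ_0)·μT` that small superlevel sets may incur above `A`.
The Cauchy–Schwarz step of Cheeger's inequality turns this into `Q_L(g₊) ≥ R²/2 · Q_D(g₊)`.
-/

section LayerCake

variable {ι : Type*} [Fintype ι] (k : ι → ℝ) {f : ι → ℝ}

lemma sum_superlevel_eq_sum_indicator (t : ℝ) :
    ∑ i with t ≤ f i, k i = ∑ i, Set.indicator {s | s ≤ f i} (fun _ ↦ k i) t := by
  simp only [sum_filter, Set.indicator_apply, Set.mem_ofPred_eq]

lemma intervalIntegrable_indicator_le (x c a b : ℝ) :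
    IntervalIntegrable (Set.indicator {s | s ≤ x} fun _ ↦ c) MeasureTheory.volume a b :=
  ⟨(MeasureTheory.integrableOn_const (by simp)).indicator measurableSet_Iic,
    (MeasureTheory.integrableOn_const (by simp)).indicator measurableSet_Iic⟩

lemma intervalIntegrable_sum_superlevel (a b : ℝ) :
    IntervalIntegrable (fun t ↦ ∑ i with t ≤ f i, k i) MeasureTheory.volume a b := by
  simp only [sum_superlevel_eq_sum_indicator, ← Finset.sum_apply]
  exact .sum _ fun i _ ↦ intervalIntegrable_indicator_le (f i) (k i) a b

lemma integral_sum_superlevel {B : ℝ} (hf₀ : ∀ i, 0 ≤ f i) (hfB : ∀ i, f i ≤ B) :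
    ∫ t in 0..B, ∑ i with t ≤ f i, k i = ∑ i, k i * f i := by
  simp only [sum_superlevel_eq_sum_indicator]
  rw [intervalIntegral.integral_finsetSum fun i _ ↦ intervalIntegrable_indicator_le (f i) (k i) 0 B]
  refine sum_congr rfl fun i _ ↦ ?_
  rw [intervalIntegral.integral_indicator ⟨hf₀ i, hfB i⟩, intervalIntegral.integral_const,
    smul_eq_mul, sub_zero, mul_comm]

end LayerCake

lemma add_le_integral_of_le_of_le {F : ℝ → ℝ} {a b c m k : ℝ}
    (hFab : IntervalIntegrable F MeasureTheory.volume a b)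
    (hFbc : IntervalIntegrable F MeasureTheory.volume b c) (hab : a ≤ b) (hbc : b ≤ c)
    (hm : ∀ t ∈ Set.Ioo a b, m ≤ F t) (hk : ∀ t ∈ Set.Ioo b c, k ≤ F t) :
    (b - a) * m + (c - b) * k ≤ ∫ t in a..c, F t := by
  rw [← intervalIntegral.integral_add_adjacent_intervals hFab hFbc, ← smul_eq_mul,
    ← smul_eq_mul, ← intervalIntegral.integral_const, ← intervalIntegral.integral_const]
  exact add_le_add (intervalIntegral.integral_mono_on_of_le_Ioo hab (by simp) hFab hm)
    (intervalIntegral.integral_mono_on_of_le_Ioo hbc (by simp) hFbc hk)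

lemma sum_mul_sq_add_le_sum_nonpos {ι : Type*} [Fintype ι] {d g : ι → ℝ} {a b : ℝ}
    (hd : ∀ i, 0 ≤ d i) (ha : 0 ≤ a) (hga : ∀ i, a ≤ |g i|) (hgb : ∀ i, |g i| ≤ b)
    (hg : ∑ i, d i * g i = 0) :
    ∑ i, d i * g i ^ 2 + a * b * ∑ i, d i ≤ 2 * b * (a + b) * ∑ i with g i ≤ 0, d i := by
  have pointwise (i : ι) :
      d i * ((g i - a) * (g i - b)) ≤ if g i ≤ 0 then 2 * b * (a + b) * d i else 0 := by
    have hai := hga i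
    have hbi := abs_le.1 (hgb i)
    split_ifs with hi
    · have : (a - g i) * (b - g i) ≤ (a + b) * (2 * b) := by gcongr <;> linarith
      linarith [mul_le_mul_of_nonneg_left this (hd i)]
    · rw [abs_of_pos (not_le.1 hi)] at hai
      exact mul_nonpos_of_nonneg_of_nonpos (hd i)
        (mul_nonpos_of_nonneg_of_nonpos (sub_nonneg.2 hai) (sub_nonpos.2 hbi.2))
  calc ∑ i, d i * g i ^ 2 + a * b * ∑ i, d i
      = ∑ i, d i * g i ^ 2 - (a + b) * ∑ i, d i * g i + a * b * ∑ i, d i := by rw [hg]; ring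
    _ = ∑ i, d i * ((g i - a) * (g i - b)) := by
        simp only [mul_sum, ← sum_sub_distrib, ← sum_add_distrib]
        exact sum_congr rfl fun i _ ↦ by ring
    _ ≤ ∑ i, if g i ≤ 0 then 2 * b * (a + b) * d i else 0 := sum_le_sum fun i _ ↦ pointwise i
    _ = 2 * b * (a + b) * ∑ i with g i ≤ 0, d i := by rw [← sum_filter, mul_sum]

lemma superlevel_posPart_sq_subset {ι : Type*} [Fintype ι] (g : ι → ℝ) {t : ℝ} (ht : 0 < t) :
    ({i | t ≤ max (g i) 0 ^ 2} : Finset ι) ⊆ ({i | 0 < g i} : Finset ι) := by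
  refine monotone_filter_right _ fun i _ (hi : t ≤ max (g i) 0 ^ 2) ↦ ?_
  by_contra hgi
  rw [max_eq_right (not_lt.1 hgi)] at hi
  linarith

/-- The surplus below the level `A = μ/((1-μ)T)` pays for the deficit up to `B = (1-μ)/(μT)`. -/
lemma level_budget_nonneg {μ φ₀ φμ R T : ℝ} (hμ₀ : 0 < μ) (hμ : μ ≤ 1 / 2) (hT : 0 < T)
    (hR₁ : R * (1 - μ) ≤ μ * φμ)
    (hR₂ : R * (1 - μ - μ ^ 2) ≤ μ ^ 2 * φμ + (1 - 2 * μ) * φ₀) :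
    0 ≤ μ / ((1 - μ) * T) * (φμ * (μ * T) - R * ((1 - μ) * T)) +
      ((1 - μ) / (μ * T) - μ / ((1 - μ) * T)) * -(max 0 (R - φ₀) * (μ * T)) := by
  have hμ' : 0 < 1 - μ := by linarith
  have deficit_le : (1 - 2 * μ) * max 0 (R - φ₀) ≤ μ * (μ * φμ - R * (1 - μ)) := by
    rw [mul_max_of_nonneg _ _ (by linarith : 0 ≤ 1 - 2 * μ), mul_zero]
    exact max_le (mul_nonneg hμ₀.le (sub_nonneg.2 hR₁)) (by linarith)
  have closed_form : μ / ((1 - μ) * T) * (φμ * (μ * T) - R * ((1 - μ) * T)) +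
      ((1 - μ) / (μ * T) - μ / ((1 - μ) * T)) * -(max 0 (R - φ₀) * (μ * T)) =
      (μ * (μ * φμ - R * (1 - μ)) - (1 - 2 * μ) * max 0 (R - φ₀)) / (1 - μ) := by
    field_simp
    ring
  rw [closed_form]
  exact div_nonneg (sub_nonneg.2 deficit_le) hμ'.le

/-- A weighted undirected graph on `V`, given by its symmetric nonnegative edge weights. Loops are
allowed. -/
structure WeightedGraph (V : Type*) where
  weight : V → V → ℝ
  weight_comm : ∀ u v, weight u v = weight v u
  weight_nonneg : ∀ u v, 0 ≤ weight u v

namespace WeightedGraph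

variable {V : Type*} [Fintype V] (G : WeightedGraph V)

/-- The weighted degree of a vertex. -/
def degree (v : V) : ℝ := ∑ u, G.weight v u

/-- The volume of a vertex set: the sum of its degrees. -/
def vol (S : Finset V) : ℝ := ∑ v ∈ S, G.degree v

/-- The Laplacian quadratic form `Q_L`; the factor `1/2` is there because every edge occurs twice
in the sum. -/
noncomputable def laplacianForm (x : V → ℝ) : ℝ :=
  1 / 2 * ∑ u, ∑ v, G.weight u v * (x u - x v) ^ 2

/-- The degree quadratic form `Q_D`, the squared norm of `x` with respect to the degrees. -/
def degreeForm (x : V → ℝ) : ℝ := ∑ v, G.degree v * x v ^ 2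

/-- The total variation of a function along the edges of the graph, the `L¹` counterpart of the
Laplacian form. -/
noncomputable def totalVariation (f : V → ℝ) : ℝ :=
  1 / 2 * ∑ u, ∑ v, G.weight u v * |f u - f v|

/-- A vertex set is `μ`-balanced if both it and its complement have at least the fraction `μ` of
the total volume. -/
def IsBalanced (μ : ℝ) (S : Finset V) : Prop :=
  μ * G.vol univ ≤ G.vol S ∧ G.vol S ≤ (1 - μ) * G.vol univ

/-- Feasibility of a vector for the spectral program for `μ`. -/
structure IsSpectralFeasible (μ : ℝ) (x : V → ℝ) : Prop where
  sum_eq_zero : ∑ v, G.degree v * x v = 0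
  degreeForm_eq_one : G.degreeForm x = 1
  le_abs : ∀ v, √(μ / ((1 - μ) * G.vol univ)) ≤ |x v|
  abs_le : ∀ v, |x v| ≤ √((1 - μ) / (μ * G.vol univ))

lemma degree_nonneg (v : V) : 0 ≤ G.degree v := sum_nonneg fun _ _ ↦ G.weight_nonneg v _

lemma vol_nonneg (S : Finset V) : 0 ≤ G.vol S := sum_nonneg fun v _ ↦ G.degree_nonneg v

lemma vol_mono {S U : Finset V} (h : S ⊆ U) : G.vol S ≤ G.vol U :=
  sum_le_sum_of_subset_of_nonneg h fun v _ _ ↦ G.degree_nonneg v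

lemma vol_pos (hdeg : ∀ v, 0 < G.degree v) {S : Finset V} (hS : S.Nonempty) : 0 < G.vol S :=
  sum_pos (fun v _ ↦ hdeg v) hS

lemma sum_sum_weight_mul_left (f : V → ℝ) :
    ∑ u, ∑ v, G.weight u v * f u = ∑ v, G.degree v * f v :=
  sum_congr rfl fun _ _ ↦ (sum_mul univ _ _).symm

lemma sum_sum_weight_mul_right (f : V → ℝ) :
    ∑ u, ∑ v, G.weight u v * f v = ∑ v, G.degree v * f v := by
  rw [sum_comm, ← G.sum_sum_weight_mul_left f]
  exact sum_congr rfl fun u _ ↦ sum_congr rfl fun v _ ↦ by rw [G.weight_comm]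

lemma totalVariation_eq_sub (f : V → ℝ) :
    G.totalVariation f =
      ∑ v, G.degree v * f v - ∑ u, ∑ v, G.weight u v * min (f u) (f v) := by
  have abs_eq (u v : V) : G.weight u v * |f u - f v| =
      G.weight u v * f u + G.weight u v * f v - 2 * (G.weight u v * min (f u) (f v)) := by
    rw [← max_sub_min_eq_abs']
    linear_combination G.weight u v * max_add_min (f u) (f v)
  simp only [totalVariation, abs_eq, sum_sub_distrib, sum_add_distrib, ← mul_sum,
    G.sum_sum_weight_mul_left, G.sum_sum_weight_mul_right]
  ring

lemma sq_mul_degreeForm_le_laplacianForm {x : V → ℝ} {R : ℝ} (hR : 0 ≤ R)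
    (h : R * G.degreeForm x ≤ G.totalVariation fun v ↦ x v ^ 2) :
    R ^ 2 / 2 * G.degreeForm x ≤ G.laplacianForm x := by
  have amgm (a b : ℝ) : R * |a ^ 2 - b ^ 2| ≤ (a - b) ^ 2 + R ^ 2 / 2 * (a ^ 2 + b ^ 2) := by
    have factor : |a ^ 2 - b ^ 2| = |a - b| * |a + b| := by rw [← abs_mul]; ring_nf
    rw [factor]
    nlinarith [sq_nonneg (|a - b| - R / 2 * |a + b|), sq_nonneg (R * (a - b)), sq_abs (a - b),
      sq_abs (a + b)]
  have summed : R * (2 * G.totalVariation fun v ↦ x v ^ 2) ≤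
      2 * G.laplacianForm x + R ^ 2 * G.degreeForm x := by
    calc R * (2 * G.totalVariation fun v ↦ x v ^ 2)
        = ∑ u, ∑ v, G.weight u v * (R * |x u ^ 2 - x v ^ 2|) := by
          simp only [totalVariation, mul_left_comm _ R, ← mul_sum]
          ring
      _ ≤ ∑ u, ∑ v, G.weight u v * ((x u - x v) ^ 2 + R ^ 2 / 2 * (x u ^ 2 + x v ^ 2)) := by
          gcongr with u _ v _
          exacts [G.weight_nonneg u v, amgm _ _]
      _ = 2 * G.laplacianForm x + R ^ 2 * G.degreeForm x := by
          simp only [laplacianForm, degreeForm, mul_add, mul_left_comm _ (R ^ 2 / 2),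
            sum_add_distrib, ← mul_sum, G.sum_sum_weight_mul_left (fun v ↦ x v ^ 2),
            G.sum_sum_weight_mul_right (fun v ↦ x v ^ 2)]
          ring
  linarith [mul_le_mul_of_nonneg_left h hR]

lemma degreeForm_pos (hdeg : ∀ v, 0 < G.degree v) {x : V → ℝ} (hx : x ≠ 0) :
    0 < G.degreeForm x := by
  obtain ⟨v, hv⟩ := Function.ne_iff.1 hx
  exact sum_pos' (fun u _ ↦ mul_nonneg (G.degree_nonneg u) (sq_nonneg _))
    ⟨v, mem_univ v, mul_pos (hdeg v) (sq_pos_of_ne_zero hv)⟩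

lemma intervalIntegrable_vol_superlevel (f : V → ℝ) (a b : ℝ) :
    IntervalIntegrable (fun t ↦ G.vol {v | t ≤ f v}) MeasureTheory.volume a b :=
  intervalIntegrable_sum_superlevel G.degree a b

lemma integral_vol_superlevel {f : V → ℝ} {B : ℝ} (hf₀ : ∀ v, 0 ≤ f v) (hfB : ∀ v, f v ≤ B) :
    ∫ t in 0..B, G.vol {v | t ≤ f v} = ∑ v, G.degree v * f v :=
  integral_sum_superlevel G.degree hf₀ hfB

section Cut

variable [DecidableEq V]

/-- The total weight `|∂S|` of the edges leaving `S`. -/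
def cut (S : Finset V) : ℝ := ∑ u ∈ S, ∑ v ∈ Sᶜ, G.weight u v

/-- The conductance `φ(S)`, with the junk value `0` when `S` or its complement has volume `0`. -/
noncomputable def conductance (S : Finset V) : ℝ := G.cut S / min (G.vol S) (G.vol Sᶜ)

lemma cut_nonneg (S : Finset V) : 0 ≤ G.cut S :=
  sum_nonneg fun u _ ↦ sum_nonneg fun v _ ↦ G.weight_nonneg u v

lemma conductance_nonneg (S : Finset V) : 0 ≤ G.conductance S :=
  div_nonneg (G.cut_nonneg S) (le_min (G.vol_nonneg S) (G.vol_nonneg Sᶜ))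

lemma vol_add_vol_compl (S : Finset V) : G.vol S + G.vol Sᶜ = G.vol univ :=
  sum_add_sum_compl S G.degree

lemma cut_eq_vol_sub (S : Finset V) :
    G.cut S = G.vol S - ∑ u ∈ S, ∑ v ∈ S, G.weight u v := by
  rw [eq_sub_iff_add_eq, cut, ← sum_add_distrib]
  exact sum_congr rfl fun u _ ↦ sum_compl_add_sum S (G.weight u)

lemma cut_superlevel (f : V → ℝ) (t : ℝ) :
    G.cut {v | t ≤ f v} = G.vol {v | t ≤ f v} -
      ∑ p : V × V with t ≤ min (f p.1) (f p.2), G.weight p.1 p.2 := by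
  rw [cut_eq_vol_sub, ← sum_product', ← filter_product, univ_product_univ]
  simp only [le_min_iff]

lemma intervalIntegrable_cut_superlevel (f : V → ℝ) (a b : ℝ) :
    IntervalIntegrable (fun t ↦ G.cut {v | t ≤ f v}) MeasureTheory.volume a b := by
  simp only [cut_superlevel]
  exact (G.intervalIntegrable_vol_superlevel f a b).sub (intervalIntegrable_sum_superlevel _ a b)

lemma integral_cut_superlevel {f : V → ℝ} {B : ℝ} (hf₀ : ∀ v, 0 ≤ f v) (hfB : ∀ v, f v ≤ B) :
    ∫ t in 0..B, G.cut {v | t ≤ f v} = G.totalVariation f := by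
  simp only [cut_superlevel]
  rw [intervalIntegral.integral_sub (G.intervalIntegrable_vol_superlevel f 0 B)
      (intervalIntegrable_sum_superlevel _ 0 B), G.integral_vol_superlevel hf₀ hfB,
    integral_sum_superlevel (fun p : V × V ↦ G.weight p.1 p.2)
      (fun p ↦ le_min (hf₀ p.1) (hf₀ p.2)) (fun p ↦ min_le_of_left_le (hfB p.1)),
    Fintype.sum_prod_type, totalVariation_eq_sub]

lemma integral_cut_sub_mul_vol_superlevel {f : V → ℝ} {B : ℝ} (hf₀ : ∀ v, 0 ≤ f v)
    (hfB : ∀ v, f v ≤ B) (R : ℝ) :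
    ∫ t in 0..B, (G.cut {v | t ≤ f v} - R * G.vol {v | t ≤ f v}) =
      G.totalVariation f - R * ∑ v, G.degree v * f v := by
  rw [intervalIntegral.integral_sub (G.intervalIntegrable_cut_superlevel f 0 B)
      ((G.intervalIntegrable_vol_superlevel f 0 B).const_mul R),
    intervalIntegral.integral_const_mul, G.integral_cut_superlevel hf₀ hfB,
    G.integral_vol_superlevel hf₀ hfB]

lemma mul_min_vol_le_cut {S : Finset V} {c : ℝ} (hc : c ≤ G.conductance S) :
    c * min (G.vol S) (G.vol Sᶜ) ≤ G.cut S :=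
  mul_le_of_le_div₀ (G.cut_nonneg S) (le_min (G.vol_nonneg S) (G.vol_nonneg Sᶜ)) hc

lemma mul_vol_le_cut {S : Finset V} {c : ℝ}
    (hc : ∀ S : Finset V, S.Nonempty → S ≠ univ → c ≤ G.conductance S)
    (hS : G.vol S ≤ G.vol Sᶜ) : c * G.vol S ≤ G.cut S := by
  rcases eq_or_ne (G.vol S) 0 with hzero | hzero
  · rw [hzero, mul_zero]
    exact G.cut_nonneg S
  · have nonempty : S.Nonempty := nonempty_of_sum_ne_zero hzero
    have ne_univ : S ≠ univ := by
      rintro rfl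
      rw [compl_univ] at hS
      exact hzero (le_antisymm hS (G.vol_nonneg _))
    simpa only [min_eq_left hS] using G.mul_min_vol_le_cut (hc S nonempty ne_univ)

variable {G} {μ φ₀ φμ R : ℝ}

lemma IsBalanced.mul_vol_univ_le_cut {S : Finset V} (hS : G.IsBalanced μ S) (hφμ₀ : 0 ≤ φμ)
    (hφμ : φμ ≤ G.conductance S) : φμ * (μ * G.vol univ) ≤ G.cut S := by
  have hcompl := G.vol_add_vol_compl S
  have hmin : μ * G.vol univ ≤ min (G.vol S) (G.vol Sᶜ) := le_min hS.1 (by linarith [hS.2])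
  exact (mul_le_mul_of_nonneg_left hmin hφμ₀).trans (G.mul_min_vol_le_cut hφμ)

lemma IsBalanced.mul_vol_le_cut {S : Finset V} (hS : G.IsBalanced μ S) (hμ : μ ≤ 1 / 2)
    (hφμ₀ : 0 ≤ φμ) (hφμ : φμ ≤ G.conductance S)
    (hR : R * (1 - μ) ≤ μ * φμ) : R * G.vol S ≤ G.cut S := by
  have hcompl := G.vol_add_vol_compl S
  have hmin : μ * G.vol S ≤ (1 - μ) * min (G.vol S) (G.vol Sᶜ) := by
    rw [mul_min_of_nonneg _ _ (by linarith : 0 ≤ 1 - μ)]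
    refine le_min (mul_le_mul_of_nonneg_right (by linarith) (G.vol_nonneg S)) ?_
    rw [eq_sub_of_add_eq' hcompl]
    linarith [hS.2]
  have hcut := G.mul_min_vol_le_cut hφμ
  refine le_of_mul_le_mul_left ?_ (by linarith : 0 < 1 - μ)
  calc (1 - μ) * (R * G.vol S) = R * (1 - μ) * G.vol S := by ring
    _ ≤ μ * φμ * G.vol S := mul_le_mul_of_nonneg_right hR (G.vol_nonneg S)
    _ = φμ * (μ * G.vol S) := by ring
    _ ≤ φμ * ((1 - μ) * min (G.vol S) (G.vol Sᶜ)) := mul_le_mul_of_nonneg_left hmin hφμ₀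
    _ = (1 - μ) * (φμ * min (G.vol S) (G.vol Sᶜ)) := by ring
    _ ≤ (1 - μ) * G.cut S := mul_le_mul_of_nonneg_left hcut (by linarith)

lemma neg_max_mul_le_cut_sub (hμ₀ : 0 ≤ μ) (hμ : μ ≤ 1 / 2)
    (hφ₀ : ∀ S : Finset V, S.Nonempty → S ≠ univ → φ₀ ≤ G.conductance S)
    (hφμ₀ : 0 ≤ φμ) (hφμ : ∀ S, G.IsBalanced μ S → φμ ≤ G.conductance S)
    (hR : R * (1 - μ) ≤ μ * φμ) {S : Finset V} (hS : G.vol S ≤ (1 - μ) * G.vol univ) :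
    -(max 0 (R - φ₀) * (μ * G.vol univ)) ≤ G.cut S - R * G.vol S := by
  have hT := G.vol_nonneg univ
  rcases le_total (μ * G.vol univ) (G.vol S) with hlarge | hsmall
  · have hcut := IsBalanced.mul_vol_le_cut ⟨hlarge, hS⟩ hμ hφμ₀ (hφμ S ⟨hlarge, hS⟩) hR
    have : 0 ≤ max 0 (R - φ₀) * (μ * G.vol univ) := by positivity
    linarith
  · have hhalf : G.vol S ≤ G.vol Sᶜ := by
      linarith [G.vol_add_vol_compl S, mul_le_mul_of_nonneg_right hμ hT]
    have hcut := G.mul_vol_le_cut hφ₀ hhalf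
    have : (R - φ₀) * G.vol S ≤ max 0 (R - φ₀) * (μ * G.vol univ) :=
      mul_le_mul (le_max_right _ _) hsmall (G.vol_nonneg S) (le_max_left _ _)
    linarith

end Cut

namespace IsSpectralFeasible

variable {G} {μ : ℝ} {g : V → ℝ}

lemma neg (hg : G.IsSpectralFeasible μ g) : G.IsSpectralFeasible μ (-g) where
  sum_eq_zero := by simpa using hg.sum_eq_zero
  degreeForm_eq_one := by simpa [degreeForm] using hg.degreeForm_eq_one
  le_abs := by simpa using hg.le_abs
  abs_le := by simpa using hg.abs_le

lemma mul_vol_univ_le_vol_nonpos (hg : G.IsSpectralFeasible μ g) (hμ₀ : 0 < μ) (hμ₁ : μ < 1)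
    (hT : 0 < G.vol univ) : μ * G.vol univ ≤ G.vol {v | g v ≤ 0} := by
  have hμ' : 0 < 1 - μ := sub_pos.2 hμ₁
  have key := sum_mul_sq_add_le_sum_nonpos G.degree_nonneg (Real.sqrt_nonneg _) hg.le_abs
    hg.abs_le hg.sum_eq_zero
  change G.degreeForm g + _ * G.vol univ ≤ _ * G.vol {v | g v ≤ 0} at key
  set a := √(μ / ((1 - μ) * G.vol univ))
  set b := √((1 - μ) / (μ * G.vol univ))
  have hab : a * b * G.vol univ = 1 := by
    have : a * b = 1 / G.vol univ := by
      rw [← Real.sqrt_mul (by positivity), Real.sqrt_eq_iff_eq_sq (by positivity) (by positivity)]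
      field_simp
    rw [this]
    field_simp
  have hb : b ^ 2 * (μ * G.vol univ) = 1 - μ := by
    rw [Real.sq_sqrt (by positivity)]
    field_simp
  rw [hg.degreeForm_eq_one, hab] at key
  calc μ * G.vol univ ≤ μ * G.vol univ * (b * (a + b) * G.vol {v | g v ≤ 0}) :=
        le_mul_of_one_le_right (by positivity) (by linarith)
    _ = (μ * (a * b * G.vol univ) + b ^ 2 * (μ * G.vol univ)) * G.vol {v | g v ≤ 0} := by ring
    _ = G.vol {v | g v ≤ 0} := by rw [hab, hb]; ring

lemma le_posPart_sq (hg : G.IsSpectralFeasible μ g) {v : V} (hv : 0 < g v) :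
    μ / ((1 - μ) * G.vol univ) ≤ max (g v) 0 ^ 2 := by
  have := hg.le_abs v
  rwa [abs_of_pos hv, Real.sqrt_le_left hv.le, ← max_eq_left hv.le] at this

lemma posPart_sq_le (hg : G.IsSpectralFeasible μ g) (hμ₀ : 0 ≤ μ) (hμ₁ : μ ≤ 1) (v : V) :
    max (g v) 0 ^ 2 ≤ (1 - μ) / (μ * G.vol univ) := by
  have hB : 0 ≤ (1 - μ) / (μ * G.vol univ) :=
    div_nonneg (sub_nonneg.2 hμ₁) (mul_nonneg hμ₀ (G.vol_nonneg univ))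
  exact (Real.le_sqrt (le_max_right _ _) hB).1
    (max_le ((le_abs_self _).trans (hg.abs_le v)) (Real.sqrt_nonneg _))

lemma ne_zero (hg : G.IsSpectralFeasible μ g) (hμ₀ : 0 < μ) (hμ₁ : μ < 1)
    (hT : 0 < G.vol univ) (v : V) : g v ≠ 0 := by
  have hA : 0 < μ / ((1 - μ) * G.vol univ) := div_pos hμ₀ (mul_pos (sub_pos.2 hμ₁) hT)
  exact abs_pos.1 ((Real.sqrt_pos.2 hA).trans_le (hg.le_abs v))

lemma superlevel_posPart_sq_eq (hg : G.IsSpectralFeasible μ g) {t : ℝ} (ht : 0 < t)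
    (htA : t ≤ μ / ((1 - μ) * G.vol univ)) :
    ({v | t ≤ max (g v) 0 ^ 2} : Finset V) = ({v | 0 < g v} : Finset V) :=
  (superlevel_posPart_sq_subset g ht).antisymm <|
    monotone_filter_right _ fun _ _ hv ↦ htA.trans (hg.le_posPart_sq hv)

lemma isBalanced_pos (hg : G.IsSpectralFeasible μ g) (hμ₀ : 0 < μ) (hμ₁ : μ < 1)
    (hT : 0 < G.vol univ) : G.IsBalanced μ {v | 0 < g v} := by
  classical
  have nonpos := hg.mul_vol_univ_le_vol_nonpos hμ₀ hμ₁ hT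
  have nonneg := hg.neg.mul_vol_univ_le_vol_nonpos hμ₀ hμ₁ hT
  have hcompl := G.vol_add_vol_compl {v | 0 < g v}
  simp only [compl_filter, not_lt] at hcompl
  simp only [Pi.neg_apply, neg_nonpos, (hg.ne_zero hμ₀ hμ₁ hT _).symm.le_iff_lt] at nonneg
  exact ⟨nonneg, by linarith⟩

lemma degreeForm_posPart_pos (hg : G.IsSpectralFeasible μ g) (hμ₀ : 0 < μ) (hμ₁ : μ < 1)
    (hdeg : ∀ v, 0 < G.degree v) (hT : 0 < G.vol univ) :
    0 < G.degreeForm fun v ↦ max (g v) 0 := by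
  have hvol : 0 < G.vol {v | 0 < g v} :=
    (mul_pos hμ₀ hT).trans_le (hg.isBalanced_pos hμ₀ hμ₁ hT).1
  obtain ⟨v, hv⟩ := nonempty_of_sum_ne_zero hvol.ne'
  exact G.degreeForm_pos hdeg (Function.ne_iff.2 ⟨v, (lt_max_of_lt_left (mem_filter.1 hv).2).ne'⟩)

variable [DecidableEq V] {φ₀ φμ R : ℝ}

lemma mul_degreeForm_posPart_le_totalVariation (hg : G.IsSpectralFeasible μ g) (hμ₀ : 0 < μ)
    (hμ : μ ≤ 1 / 2) (hT : 0 < G.vol univ)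
    (hφ₀ : ∀ S : Finset V, S.Nonempty → S ≠ univ → φ₀ ≤ G.conductance S)
    (hφμ₀ : 0 ≤ φμ) (hφμ : ∀ S, G.IsBalanced μ S → φμ ≤ G.conductance S)
    (hR₀ : 0 ≤ R) (hR₁ : R * (1 - μ) ≤ μ * φμ)
    (hR₂ : R * (1 - μ - μ ^ 2) ≤ μ ^ 2 * φμ + (1 - 2 * μ) * φ₀) :
    R * G.degreeForm (fun v ↦ max (g v) 0) ≤ G.totalVariation fun v ↦ max (g v) 0 ^ 2 := by
  set f : V → ℝ := fun v ↦ max (g v) 0 ^ 2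
  set A := μ / ((1 - μ) * G.vol univ)
  set B := (1 - μ) / (μ * G.vol univ)
  have hμ' : 0 < 1 - μ := by linarith
  have hA : 0 ≤ A := by positivity
  have hAB : A ≤ B := by
    refine div_le_div₀ hμ'.le (by linarith) (by positivity) ?_
    exact mul_le_mul_of_nonneg_right (by linarith) hT.le
  have hf₀ (v : V) : 0 ≤ f v := sq_nonneg _
  have hfB (v : V) : f v ≤ B := hg.posPart_sq_le hμ₀.le (by linarith) v
  have hbal : G.IsBalanced μ {v | 0 < g v} := hg.isBalanced_pos hμ₀ (by linarith) hT
  have low (t : ℝ) (ht : t ∈ Set.Ioo 0 A) :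
      φμ * (μ * G.vol univ) - R * ((1 - μ) * G.vol univ) ≤
        G.cut {v | t ≤ f v} - R * G.vol {v | t ≤ f v} := by
    rw [hg.superlevel_posPart_sq_eq ht.1 ht.2.le]
    exact sub_le_sub (hbal.mul_vol_univ_le_cut hφμ₀ (hφμ _ hbal))
      (mul_le_mul_of_nonneg_left hbal.2 hR₀)
  have high (t : ℝ) (ht : t ∈ Set.Ioo A B) :
      -(max 0 (R - φ₀) * (μ * G.vol univ)) ≤ G.cut {v | t ≤ f v} - R * G.vol {v | t ≤ f v} :=
    neg_max_mul_le_cut_sub hμ₀.le hμ hφ₀ hφμ₀ hφμ hR₁ <|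
      (G.vol_mono (superlevel_posPart_sq_subset g (hA.trans_lt ht.1))).trans hbal.2
  have hint (a b : ℝ) := (G.intervalIntegrable_cut_superlevel f a b).sub
    ((G.intervalIntegrable_vol_superlevel f a b).const_mul R)
  have budget := level_budget_nonneg hμ₀ hμ hT hR₁ hR₂
  have integrated := add_le_integral_of_le_of_le (hint 0 A) (hint A B) hA hAB low high
  rw [G.integral_cut_sub_mul_vol_superlevel hf₀ hfB, sub_zero] at integrated
  exact sub_nonneg.1 (budget.trans integrated)

end IsSpectralFeasible

end WeightedGraph

theorem sweep_case_z_gt_h_general {V : Type*} [Fintype V] [DecidableEq V] [Nonempty V]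
    {G : WeightedGraph V} (hdeg : ∀ v, 0 < G.degree v) {μ : ℝ} (hμ₀ : 0 < μ) (hμ : μ ≤ 1 / 2)
    {φ₀ : ℝ}
    (hφ₀ : IsLeast {y | ∃ S : Finset V, S.Nonempty ∧ S ≠ univ ∧ y = G.conductance S} φ₀)
    {φμ : ℝ}
    (hφμ : IsLeast {y | ∃ S : Finset V, μ * G.vol univ ≤ G.vol S ∧
      G.vol S ≤ (1 - μ) * G.vol univ ∧ y = G.conductance S} φμ)
    {g : V → ℝ} (hg : G.IsSpectralFeasible μ g) :
    1 / 2 * min ((μ / (1 - μ) * φμ) ^ 2)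
        (((μ ^ 2 * φμ + (1 - 2 * μ) * φ₀) / (1 - μ - μ ^ 2)) ^ 2) ≤
      G.laplacianForm (fun v ↦ max (g v) 0) / G.degreeForm (fun v ↦ max (g v) 0) := by
  have hT : 0 < G.vol univ := G.vol_pos hdeg univ_nonempty
  have hφ₀_nonneg : 0 ≤ φ₀ := by obtain ⟨S, _, _, rfl⟩ := hφ₀.1; exact G.conductance_nonneg S
  have hφμ_nonneg : 0 ≤ φμ := by obtain ⟨S, _, _, rfl⟩ := hφμ.1; exact G.conductance_nonneg S
  have hμ₁ : 0 < 1 - μ := by linarith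
  have hμ₂ : 0 ≤ 1 - 2 * μ := by linarith
  have hμ₃ : 0 < 1 - μ - μ ^ 2 := by nlinarith
  set κ := μ / (1 - μ) * φμ
  set κ' := (μ ^ 2 * φμ + (1 - 2 * μ) * φ₀) / (1 - μ - μ ^ 2)
  have hκ : 0 ≤ κ := by positivity
  have hκ' : 0 ≤ κ' := by positivity
  have hR₀ : 0 ≤ min κ κ' := le_min hκ hκ'
  have hR₁ : min κ κ' * (1 - μ) ≤ μ * φμ := by
    rw [← le_div_iff₀ hμ₁, ← div_mul_eq_mul_div]
    exact min_le_left _ _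
  have hR₂ : min κ κ' * (1 - μ - μ ^ 2) ≤ μ ^ 2 * φμ + (1 - 2 * μ) * φ₀ :=
    (le_div_iff₀ hμ₃).1 (min_le_right _ _)
  have hpos : 0 < G.degreeForm fun v ↦ max (g v) 0 :=
    hg.degreeForm_posPart_pos hμ₀ (by linarith) hdeg hT
  have hcheeger := G.sq_mul_degreeForm_le_laplacianForm hR₀ <|
    hg.mul_degreeForm_posPart_le_totalVariation hμ₀ hμ hT
      (fun S hne huniv ↦ hφ₀.2 ⟨S, hne, huniv, rfl⟩) hφμ_nonneg
      (fun S hS ↦ hφμ.2 ⟨S, hS.1, hS.2, rfl⟩) hR₀ hR₁ hR₂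
  have hsq : min (κ ^ 2) (κ' ^ 2) = min κ κ' ^ 2 := (pow_left_monotoneOn.map_min hκ hκ').symm
  rw [le_div_iff₀ hpos, hsq]
  linarith

theorem sweep_case_z_gt_h {V : Type*} [Fintype V] [DecidableEq V] [Nonempty V]
    (w : V → V → ℝ)
    (hw_symm : ∀ u v, w u v = w v u)
    (hw_nonneg : ∀ u v, 0 ≤ w u v)
    (hw_loop : ∀ v, w v v = 0)
    (d : V → ℝ) (hd : ∀ v, d v = ∑ u, w v u)
    (hd_pos : ∀ v, 0 < d v)
    (vol : Finset V → ℝ) (hvol : ∀ S : Finset V, vol S = ∑ v ∈ S, d v)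
    (cut : Finset V → ℝ) (hcut : ∀ S : Finset V, cut S = ∑ u ∈ S, ∑ v ∈ Sᶜ, w u v)
    (phi : Finset V → ℝ) (hphi : ∀ S : Finset V, phi S = cut S / min (vol S) (vol Sᶜ))
    (QL QD : (V → ℝ) → ℝ)
    (hQL : ∀ x : V → ℝ, QL x = (1/2) * ∑ u, ∑ v, w u v * (x u - x v)^2)
    (hQD : ∀ x : V → ℝ, QD x = ∑ v, d v * x v ^ 2)
    (μ : ℝ) (hμ0 : 0 < μ) (hμhalf : μ ≤ 1/2)
    (phi0 : ℝ)
    (hphi0 : IsLeast {y : ℝ | ∃ S : Finset V, S.Nonempty ∧ S ≠ Finset.univ ∧ y = phi S} phi0)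
    (phimu : ℝ)
    (hphimu : IsLeast {y : ℝ | ∃ S : Finset V,
        μ * vol Finset.univ ≤ vol S ∧ vol S ≤ (1 - μ) * vol Finset.univ ∧ y = phi S} phimu)
    (n : ℕ) (hn : n = Fintype.card V) (e : Fin n ≃ V)
    (g : V → ℝ)
    (hg_sum : (∑ v, d v * g v) = 0)
    (hg_norm : QD g = 1)
    (hg_bounds : ∀ v, Real.sqrt (μ / ((1 - μ) * vol Finset.univ)) ≤ |g v| ∧
        |g v| ≤ Real.sqrt ((1 - μ) / (μ * vol Finset.univ)))
    (hg_sorted : ∀ i j : Fin n, i ≤ j → g (e j) ≤ g (e i))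
    (S : ℕ → Finset V)
    (hS : ∀ j : ℕ, S j = (Finset.univ.filter fun i : Fin n => (i : ℕ) < j).image e)
    (h : ℕ) (hh_le : h ≤ n)
    (hh1 : vol (S h) ≤ vol Finset.univ / 2)
    (hh2 : ∀ j : ℕ, j ≤ n → vol (S j) ≤ vol Finset.univ / 2 → j ≤ h)
    (z : ℕ) (hz_le : z ≤ n)
    (hz1 : ∀ i : Fin n, (i : ℕ) < z → 0 < g (e i))
    (hz2 : ∀ i : Fin n, z ≤ (i : ℕ) → g (e i) ≤ 0)
    (hzh : h < z) :
    QL (fun v => max (g v) 0) / QD (fun v => max (g v) 0) ≥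
      (1/2) * min ((μ / (1 - μ) * phimu)^2)
                  (((μ^2 * phimu + (1 - 2*μ) * phi0) / (1 - μ - μ^2))^2) := by
  rcases funext hd, funext hvol, funext hcut, funext hphi, funext hQL, funext hQD with
    ⟨rfl, rfl, rfl, rfl, rfl, rfl⟩
  exact sweep_case_z_gt_h_general (G := ⟨w, hw_symm, hw_nonneg⟩) hd_pos hμ0 hμhalf hphi0 hphimu
    ⟨hg_sum, hg_norm, fun v ↦ (hg_bounds v).1, fun v ↦ (hg_bounds v).2⟩
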